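/- arXiv:1407.7168 — 6 statements merged into one kernel-verified Lean document; each statement's English description precedes it below -/
import Mathlib

section
/- Let m₁, …, m_n ∈ ℝⁿ be linearly independent vectors and K = {t₁m₁ + ⋯ + t_n m_n : tᵢ ≥ 0} the simplicial cone they generate. Let ξ ∈ ℝⁿ satisfy ⟨ξ, mᵢ⟩ < 0 for every i. Then x ↦ e^{⟨ξ,x⟩} is Lebesgue-integrable on K and ∫_K e^{⟨ξ,x⟩} dx = |det(m₁, …, m_n)| / ∏_{i=1}^{n} (−⟨ξ, mᵢ⟩). -/
open MeasureTheory

/-- Exponential integral over a general full-dimensional simplicial cone: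
if `m 0, …, m (n-1)` are linearly independent in `ℝⁿ` and `⟨ξ, mᵢ⟩ < 0` for all `i`,
then `x ↦ e^{⟨ξ,x⟩}` is integrable on the cone `K` generated by the `mᵢ` and
`∫_K e^{⟨ξ,x⟩} dx = |det(m₁,…,m_n)| / ∏ᵢ (−⟨ξ,mᵢ⟩)`. -/
theorem exp_integral_simplicial_cone
    (n : ℕ) (m : Fin n → (Fin n → ℝ))
    (hind : LinearIndependent ℝ m)
    (K : Set (Fin n → ℝ))
    (hK : K = {x | ∃ t : Fin n → ℝ, (∀ i, 0 ≤ t i) ∧ x = ∑ i, t i • m i})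
    (ξ : Fin n → ℝ)
    (hξ : ∀ i : Fin n, (∑ j, ξ j * m i j) < 0) :
    IntegrableOn (fun x : Fin n → ℝ => Real.exp (∑ j, ξ j * x j)) K volume ∧
    (∫ x in K, Real.exp (∑ j, ξ j * x j))
      = |Matrix.det (Matrix.of fun i j => m j i)|
        / ∏ i : Fin n, (-(∑ j, ξ j * m i j)) := by
  set A : Matrix (Fin n) (Fin n) ℝ := Matrix.of fun i j => m j i with hA
  let L : (Fin n → ℝ) →L[ℝ] (Fin n → ℝ) := LinearMap.toContinuousLinearMap (Matrix.toLin' A)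
  have hL : ∀ t, L t = ∑ i, t i • m i := by
    intro t
    ext j
    simp [L, hA, Matrix.mulVec, dotProduct, mul_comm]
  have hdet : L.det = A.det := by
    simp [L, ContinuousLinearMap.det]
  have hinj : Function.Injective L := by
    intro s t hst
    rw [hL, hL] at hst
    have h0 : ∑ i, (s i - t i) • m i = 0 := by
      simp [sub_smul, Finset.sum_sub_distrib, hst]
    have := Fintype.linearIndependent_iff.1 hind _ h0
    ext i
    exact sub_eq_zero.1 (this i)
  let S : Set (Fin n → ℝ) := Set.univ.pi fun _ => Set.Ici 0
  have hS : MeasurableSet S := MeasurableSet.univ_pi fun _ => measurableSet_Ici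
  have hKS : K = L '' S := by
    rw [hK]
    ext x
    simp only [Set.mem_ofPred_eq, Set.mem_image, S, Set.mem_univ_pi, Set.mem_Ici, hL]
    constructor
    · rintro ⟨t, h, rfl⟩
      exact ⟨t, h, rfl⟩
    · rintro ⟨t, h, rfl⟩
      exact ⟨t, h, rfl⟩
  have hd : ∀ x ∈ S, HasFDerivWithinAt L L S x := fun x _ => L.hasFDerivWithinAt
  have hexp : ∀ t, Real.exp (∑ j, ξ j * L t j)
      = ∏ i, Real.exp ((∑ j, ξ j * m i j) * t i) := by
    intro t
    rw [← Real.exp_sum]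
    congr 1
    simp only [hL, Finset.sum_apply, Pi.smul_apply, smul_eq_mul, Finset.mul_sum, Finset.sum_mul]
    rw [Finset.sum_comm]
    refine Finset.sum_congr rfl fun i _ => Finset.sum_congr rfl fun j _ => by ring
  have hres : (volume : Measure (Fin n → ℝ)).restrict S
      = Measure.pi fun _ : Fin n => (volume : Measure ℝ).restrict (Set.Ici 0) := by
    rw [volume_pi]
    exact Measure.restrict_pi_pi _ _
  have h1 : ∀ i : Fin n, Integrable (fun x : ℝ => Real.exp ((∑ j, ξ j * m i j) * x))
      ((volume : Measure ℝ).restrict (Set.Ici 0)) := by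
    intro i
    rw [← restrict_Ioi_eq_restrict_Ici]
    exact integrableOn_exp_mul_Ioi (hξ i) 0
  constructor
  · rw [hKS, integrableOn_image_iff_integrableOn_abs_det_fderiv_smul volume hS hd hinj.injOn]
    simp only [hexp, IntegrableOn, hres]
    exact (Integrable.fintype_prod h1).const_mul |L.det|
  · rw [hKS, integral_image_eq_integral_abs_det_fderiv_smul volume hS hd hinj.injOn]
    simp only [hexp, hres, hdet]
    rw [integral_smul, integral_fintype_prod_eq_prod (𝕜 := ℝ)
      (fun (i : Fin n) (x : ℝ) => Real.exp ((∑ j, ξ j * m i j) * x)), smul_eq_mul, div_eq_mul_inv,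
      ← Finset.prod_inv_distrib]
    congr 1
    refine Finset.prod_congr rfl fun i _ => ?_
    rw [← restrict_Ioi_eq_restrict_Ici, integral_exp_mul_Ioi (hξ i) 0]
    simp [neg_div, inv_neg]
end

section
/- For real t ≠ 0, define B(t) = 1/(1 − e^t) + 1/t. Let x, y be real numbers with x ≠ 0, y ≠ 0, x ≠ y, and x + y ≠ 0. Then B(−x)B(−y) + [B(x−y)B(x) + (1/x)(B(−y) − B(x−y)) − (1/(y−x))(B((x+y)/2) − B(x))] + [B(y−x)B(y) + (1/y)(B(−x) − B(y−x)) − (1/(x−y))(B((x+y)/2) − B(y))] = 1. -/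
/-- The function `B(t) = 1/(1 − e^t) + 1/t`. -/
noncomputable def Bfun (t : ℝ) : ℝ := 1 / (1 - Real.exp t) + 1 / t

lemma Bfun_neg_aux (t : ℝ) (ht : t ≠ 0) : Bfun (-t) = 1 - Bfun t := by
  have h1 : Real.exp t ≠ 1 := by simpa using ht
  have h2 : (1 - Real.exp t) ≠ 0 := sub_ne_zero.mpr h1.symm
  have h3 : Real.exp t - 1 ≠ 0 := sub_ne_zero.mpr h1
  have h0 := Real.exp_ne_zero t
  have h4 : 1 / (1 - (Real.exp t)⁻¹) = 1 - 1 / (1 - Real.exp t) := by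
    have : 1 - (Real.exp t)⁻¹ = (Real.exp t - 1) / Real.exp t := by field_simp
    rw [this]
    field_simp
    ring
  unfold Bfun
  rw [Real.exp_neg, h4, one_div_neg_eq_neg_one_div]
  ring

lemma key_aux (x y : ℝ) (hx : x ≠ 0) (hy : y ≠ 0) (hxy : x ≠ y) :
    1 / (1 - Real.exp x) * (1 / (1 - Real.exp y)) - 1 / (1 - Real.exp x)
    + 1 / (1 - Real.exp (x - y)) * (1 / (1 - Real.exp x) - 1 / (1 - Real.exp y)) = 0 := by
  have h1 : (1 - Real.exp x) ≠ 0 := sub_ne_zero.mpr (Ne.symm (by simpa using hx))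
  have h2 : (1 - Real.exp y) ≠ 0 := sub_ne_zero.mpr (Ne.symm (by simpa using hy))
  have h3 : Real.exp y - Real.exp x ≠ 0 := sub_ne_zero.mpr (by simpa [eq_comm] using hxy)
  have h0 := Real.exp_ne_zero y
  have : 1 - Real.exp (x - y) = (Real.exp y - Real.exp x) / Real.exp y := by
    rw [Real.exp_sub]; field_simp
  rw [this]
  field_simp
  ring

/-- The identity `r^Ψ(σ₀) + r^Ψ(σ₁) + r^Ψ(σ₂) = 1` for the three equivariant Todd
class coefficients of the standard triangle. -/
theorem todd_coeffs_sum_to_one (x y : ℝ)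
    (hx : x ≠ 0) (hy : y ≠ 0) (hxy : x ≠ y) (hxy' : x + y ≠ 0) :
    Bfun (-x) * Bfun (-y)
    + (Bfun (x - y) * Bfun x + (1 / x) * (Bfun (-y) - Bfun (x - y))
        - (1 / (y - x)) * (Bfun ((x + y) / 2) - Bfun x))
    + (Bfun (y - x) * Bfun y + (1 / y) * (Bfun (-x) - Bfun (y - x))
        - (1 / (x - y)) * (Bfun ((x + y) / 2) - Bfun y)) = 1 := by
  have hd : x - y ≠ 0 := sub_ne_zero.mpr hxy
  have key := key_aux x y hx hy hxy
  have e : y - x = -(x - y) := by ring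
  rw [e, Bfun_neg_aux x hx, Bfun_neg_aux y hy, Bfun_neg_aux _ hd, one_div_neg_eq_neg_one_div]
  generalize Bfun ((x + y) / 2) = M
  unfold Bfun
  generalize 1 / (1 - Real.exp x) = A at *
  generalize 1 / (1 - Real.exp y) = B at *
  generalize 1 / (1 - Real.exp (x - y)) = C at *
  have r : 1 / (x - y) * (1 / y - 1 / x) = 1 / x * (1 / y) := by field_simp
  linear_combination key + r
end

section
/- For real t ≠ 0, define B(t) = 1/(1 − e^t) + 1/t. Let ξ₁, ξ₂ be real numbers with ξ₁ < 0, ξ₂ < 0, and ξ₁ ≠ ξ₂, and let T = {(s,t) ∈ ℝ² : s ≥ 0, t ≥ 0, s + t ≤ 1}. Then 1 + e^{ξ₁} + e^{ξ₂} = B(ξ₁)B(ξ₂) + e^{ξ₁}·[B(ξ₂−ξ₁)B(−ξ₁) − (1/ξ₁)(B(ξ₂) − B(ξ₂−ξ₁)) + (1/(ξ₂−ξ₁))(B(−(ξ₁+ξ₂)/2) − B(−ξ₁))] + e^{ξ₂}·[B(ξ₁−ξ₂)B(−ξ₂) − (1/ξ₂)(B(ξ₁) − B(ξ₁−ξ₂))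 + (1/(ξ₁−ξ₂))(B(−(ξ₁+ξ₂)/2) − B(−ξ₂))] + B(ξ₂)·(e^{ξ₁} − 1)/ξ₁ + B(ξ₁)·(e^{ξ₂} − 1)/ξ₂ + B(−(ξ₁+ξ₂)/2)·(e^{ξ₂} − e^{ξ₁})/(ξ₂−ξ₁) + ∫_T e^{ξ₁ s + ξ₂ t} ds dt. -/
open MeasureTheory

theorem tri_integral (x y : ℝ) (hx : x ≠ 0) (hy : y ≠ 0) (hxy : x - y ≠ 0) :
    ∫ p in {p : ℝ × ℝ | 0 ≤ p.1 ∧ 0 ≤ p.2 ∧ p.1 + p.2 ≤ 1}, Real.exp (x * p.1 + y * p.2)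
      = ((Real.exp x - Real.exp y) / (x - y) - (Real.exp x - 1) / x) / y := by
  have hcl : IsClosed {p : ℝ × ℝ | 0 ≤ p.1 ∧ 0 ≤ p.2 ∧ p.1 + p.2 ≤ 1} := by
    have c1 : IsClosed {p : ℝ × ℝ | 0 ≤ p.1} := isClosed_le (by fun_prop) (by fun_prop)
    have c2 : IsClosed {p : ℝ × ℝ | 0 ≤ p.2} := isClosed_le (by fun_prop) (by fun_prop)
    have c3 : IsClosed {p : ℝ × ℝ | p.1 + p.2 ≤ 1} := isClosed_le (by fun_prop) (by fun_prop)
    exact c1.inter (c2.inter c3)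
  have hco : IsCompact {p : ℝ × ℝ | 0 ≤ p.1 ∧ 0 ≤ p.2 ∧ p.1 + p.2 ≤ 1} := by
    refine IsCompact.of_isClosed_subset (isCompact_Icc (a := ((0 : ℝ), (0 : ℝ))) (b := ((1 : ℝ), (1 : ℝ)))) hcl ?_
    rintro ⟨a, b⟩ ⟨h1, h2, h3⟩
    simp only at h1 h2 h3
    exact ⟨⟨h1, h2⟩, ⟨by simp only; linarith, by simp only; linarith⟩⟩
  have hint : IntegrableOn (fun p : ℝ × ℝ => Real.exp (x * p.1 + y * p.2))
      {p : ℝ × ℝ | 0 ≤ p.1 ∧ 0 ≤ p.2 ∧ p.1 + p.2 ≤ 1} :=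
    ContinuousOn.integrableOn_compact hco (by fun_prop)
  rw [← integral_indicator hcl.measurableSet, Measure.volume_eq_prod, integral_prod]
  swap
  · rw [← Measure.volume_eq_prod]
    exact hint.integrable_indicator hcl.measurableSet
  have hin : ∀ s : ℝ, (∫ t : ℝ, Set.indicator {p : ℝ × ℝ | 0 ≤ p.1 ∧ 0 ≤ p.2 ∧ p.1 + p.2 ≤ 1}
      (fun p : ℝ × ℝ => Real.exp (x * p.1 + y * p.2)) (s, t)) =
      Set.indicator (Set.Icc 0 1)
        (fun s => (Real.exp (y + (x - y) * s) - Real.exp (x * s)) / y) s := by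
    intro s
    by_cases hs : s ∈ Set.Icc (0 : ℝ) 1
    · rw [Set.indicator_of_mem hs]
      have : (fun t : ℝ => Set.indicator {p : ℝ × ℝ | 0 ≤ p.1 ∧ 0 ≤ p.2 ∧ p.1 + p.2 ≤ 1}
          (fun p : ℝ × ℝ => Real.exp (x * p.1 + y * p.2)) (s, t)) =
          Set.indicator (Set.Icc 0 (1 - s)) (fun t => Real.exp (x * s + y * t)) := by
        ext t
        simp only [Set.indicator, Set.mem_ofPred_eq, Set.mem_Icc]
        have : (0 ≤ s ∧ 0 ≤ t ∧ s + t ≤ 1) ↔ (0 ≤ t ∧ t ≤ 1 - s) :=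
          ⟨fun h => ⟨h.2.1, by linarith [h.2.2]⟩, fun h => ⟨hs.1, h.1, by linarith [h.2]⟩⟩
        simp only [this]
      rw [this, integral_indicator measurableSet_Icc, integral_Icc_eq_integral_Ioc,
        ← intervalIntegral.integral_of_le (by linarith [hs.2])]
      rw [intervalIntegral.integral_eq_sub_of_hasDerivAt
        (f := fun t => Real.exp (x * s + y * t) / y)]
      · rw [← sub_div]
        congr 3 <;> ring
      · intro t _
        have h := ((((hasDerivAt_id t).const_mul y).const_add (x * s)).exp).div_const y
        refine HasDerivAt.congr_deriv h ?_
        try simp only [id]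
        field_simp
      · exact Continuous.intervalIntegrable (by fun_prop) _ _
    · rw [Set.indicator_of_notMem hs]
      apply integral_eq_zero_of_ae
      refine Filter.Eventually.of_forall (fun t => ?_)
      apply Set.indicator_of_notMem
      rintro ⟨h1, h2, h3⟩
      simp only at h1 h2 h3
      exact hs ⟨h1, by linarith⟩
  simp only [hin]
  rw [integral_indicator measurableSet_Icc, integral_Icc_eq_integral_Ioc,
    ← intervalIntegral.integral_of_le (by norm_num)]
  rw [intervalIntegral.integral_eq_sub_of_hasDerivAt
    (f := fun s => (Real.exp (y + (x - y) * s) / (x - y) - Real.exp (x * s) / x) / y)]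
  · simp only [mul_one, mul_zero, add_zero, Real.exp_zero, add_sub_cancel]
    ring
  · intro s _
    have h := (((((hasDerivAt_id s).const_mul (x - y)).const_add y).exp.div_const (x - y)).sub
      (((hasDerivAt_id s).const_mul x).exp.div_const x)).div_const y
    refine HasDerivAt.congr_deriv h ?_
    try simp only [id]
    field_simp
  · exact Continuous.intervalIntegrable (by fun_prop) _ _

/-- The local Euler–Maclaurin (sum–integral interpolation) identity for the
standard triangle with vertices `(0,0)`, `(1,0)`, `(0,1)`. -/
theorem euler_maclaurin_triangle (ξ₁ ξ₂ : ℝ)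
    (h1 : ξ₁ < 0) (h2 : ξ₂ < 0) (h12 : ξ₁ ≠ ξ₂)
    (T : Set (ℝ × ℝ))
    (hT : T = {p : ℝ × ℝ | 0 ≤ p.1 ∧ 0 ≤ p.2 ∧ p.1 + p.2 ≤ 1}) :
    1 + Real.exp ξ₁ + Real.exp ξ₂ =
      Bfun ξ₁ * Bfun ξ₂
      + Real.exp ξ₁ *
          (Bfun (ξ₂ - ξ₁) * Bfun (-ξ₁)
            - (1 / ξ₁) * (Bfun ξ₂ - Bfun (ξ₂ - ξ₁))
            + (1 / (ξ₂ - ξ₁)) * (Bfun (-(ξ₁ + ξ₂) / 2) - Bfun (-ξ₁)))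
      + Real.exp ξ₂ *
          (Bfun (ξ₁ - ξ₂) * Bfun (-ξ₂)
            - (1 / ξ₂) * (Bfun ξ₁ - Bfun (ξ₁ - ξ₂))
            + (1 / (ξ₁ - ξ₂)) * (Bfun (-(ξ₁ + ξ₂) / 2) - Bfun (-ξ₂)))
      + Bfun ξ₂ * ((Real.exp ξ₁ - 1) / ξ₁)
      + Bfun ξ₁ * ((Real.exp ξ₂ - 1) / ξ₂)
      + Bfun (-(ξ₁ + ξ₂) / 2) * ((Real.exp ξ₂ - Real.exp ξ₁) / (ξ₂ - ξ₁))
      + ∫ p in T, Real.exp (ξ₁ * p.1 + ξ₂ * p.2) := by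
  subst hT
  have d : ξ₁ - ξ₂ ≠ 0 := sub_ne_zero.2 h12
  have d' : ξ₂ - ξ₁ ≠ 0 := sub_ne_zero.2 h12.symm
  have hm : ξ₂ - ξ₁ = -(ξ₁ - ξ₂) := by ring
  rw [tri_integral ξ₁ ξ₂ h1.ne h2.ne d]
  generalize Bfun (-(ξ₁ + ξ₂) / 2) = m
  have ha : Real.exp ξ₁ ≠ 0 := Real.exp_ne_zero _
  have hb : Real.exp ξ₂ ≠ 0 := Real.exp_ne_zero _
  have ha1 : 1 - Real.exp ξ₁ ≠ 0 := by
    have := Real.exp_lt_one_iff.mpr h1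
    linarith
  have hb1 : 1 - Real.exp ξ₂ ≠ 0 := by
    have := Real.exp_lt_one_iff.mpr h2
    linarith
  have hab : Real.exp ξ₁ - Real.exp ξ₂ ≠ 0 :=
    sub_ne_zero.2 (fun h => h12 (Real.exp_injective h))
  simp only [Bfun, Real.exp_sub, Real.exp_neg]
  generalize Real.exp ξ₁ = a at *
  generalize Real.exp ξ₂ = b at *
  have e1 : 1 / (1 - b / a) = a / (a - b) := by
    rw [one_sub_div ha, one_div_div]
  have e2 : 1 / (1 - a / b) = -(b / (a - b)) := by
    rw [one_sub_div hb, one_div_div, ← neg_sub a b, div_neg]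
  have e3 : 1 / (1 - a⁻¹) = -(a / (1 - a)) := by
    rw [← one_div, one_sub_div ha, one_div_div, ← neg_sub 1 a, div_neg]
  have e4 : 1 / (1 - b⁻¹) = -(b / (1 - b)) := by
    rw [← one_div, one_sub_div hb, one_div_div, ← neg_sub 1 b, div_neg]
  rw [e1, e2, e3, e4, hm]
  have hx := h1.ne
  have hy := h2.ne
  clear h1 h2 e1 e2 e3 e4 hm d'
  field_simp
  ring
end

section
/- For real t ≠ 0, define B(t) = 1/(1 − e^t) + 1/t. Define r₁(x,y) = B(x−y)B(x) + (1/x)(B(−y) − B(x−y)) − (1/(y−x))(B((x+y)/2) − B(x)) on the set U = {(x,y) ∈ ℝ² : x ≠ 0, y ≠ 0, x ≠ y, x + y ≠ 0}. Then r₁(x,y) tends to 3/8 as (x,y) tends to (0,0) within U. -/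
open Filter

/-- The Todd coefficient `r₁(x,y) = r^Ψ(σ₁)` of the standard triangle. -/
noncomputable def r1fun (p : ℝ × ℝ) : ℝ :=
  Bfun (p.1 - p.2) * Bfun p.1
    + (1 / p.1) * (Bfun (-p.2) - Bfun (p.1 - p.2))
    - (1 / (p.2 - p.1)) * (Bfun ((p.1 + p.2) / 2) - Bfun p.1)

theorem ext_aux : ∃ C : ℝ → ℝ, (∀ t, t ≠ 0 → Bfun t = C t) ∧ C 0 = 1/2 ∧ HasStrictDerivAt C (-1/12) 0 := by
  have h0 : HasFPowerSeriesAt Real.exp (NormedSpace.expSeries ℝ ℝ) 0 := by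
    rw [Real.exp_eq_exp_ℝ]
    exact NormedSpace.exp_hasFPowerSeriesAt_zero
  have h1 := h0.has_fpower_series_dslope_fslope
  have h2 := h1.has_fpower_series_dslope_fslope
  have c : ∀ n, (NormedSpace.expSeries ℝ ℝ).coeff n = (n.factorial : ℝ)⁻¹ := by
    intro n
    simp [FormalMultilinearSeries.coeff, NormedSpace.expSeries, List.prod_ofFn]
  set E := dslope Real.exp 0 with hE
  set D := dslope E 0 with hD
  have E0 : E 0 = 1 := by
    rw [← h1.coeff_zero 1]
    change FormalMultilinearSeries.coeff _ 0 = _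
    simp [c]
  have D0 : D 0 = 1/2 := by
    rw [← h2.coeff_zero 1]
    change FormalMultilinearSeries.coeff _ 0 = _
    simp [c]
  have hE' : HasStrictDerivAt E (1/2) 0 := by
    have := h1.hasStrictDerivAt
    have e : (NormedSpace.expSeries ℝ ℝ).fslope.coeff 1 = 1/2 := by
      simp [c]
    change HasStrictDerivAt E ((NormedSpace.expSeries ℝ ℝ).fslope.coeff 1) 0 at this
    rwa [e] at this
  have hD' : HasStrictDerivAt D (1/6) 0 := by
    have := h2.hasStrictDerivAt
    have e : (NormedSpace.expSeries ℝ ℝ).fslope.fslope.coeff 1 = 1/6 := by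
      simp [c, Nat.factorial]
      try norm_num
    change HasStrictDerivAt D ((NormedSpace.expSeries ℝ ℝ).fslope.fslope.coeff 1) 0 at this
    rwa [e] at this
  refine ⟨fun t => D t / E t, ?_, ?_, ?_⟩
  · intro t ht
    have e1 : E t = (Real.exp t - 1) / t := by
      simp [hE, dslope_of_ne _ ht, slope_def_field]
    have e2 : D t = (E t - 1) / t := by
      rw [hD, dslope_of_ne _ ht, slope_def_field, E0, sub_zero]
    have hne : Real.exp t - 1 ≠ 0 := by
      rw [sub_ne_zero]; simpa using ht
    have hne' : 1 - Real.exp t ≠ 0 := by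
      rw [← neg_sub]; exact neg_ne_zero.2 hne
    have h3 : 1 / (1 - Real.exp t) = - (1 / (Real.exp t - 1)) := by
      rw [← neg_sub, one_div_neg_eq_neg_one_div]
    rw [Bfun, h3]
    simp only [e2, e1]
    field_simp
    ring
  · simp [E0, D0]
  · have := hD'.fun_div hE' (by rw [E0]; norm_num)
    rw [E0, D0] at this
    have e : ((1/6 * 1 - 1/2 * (1/2)) / 1 ^ 2 : ℝ) = -1/12 := by norm_num
    rwa [e] at this

theorem quot_aux {α : Type*} {l : Filter α} {C : ℝ → ℝ} {c : ℝ} (h : HasStrictDerivAt C c 0)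
    {u v : α → ℝ} (hu : Tendsto u l (nhds 0)) (hv : Tendsto v l (nhds 0))
    (hne : ∀ᶠ a in l, u a ≠ v a) :
    Tendsto (fun a => (C (u a) - C (v a)) / (u a - v a)) l (nhds c) := by
  have h1 := h.hasStrictFDerivAt.isLittleO.comp_tendsto (hu.prodMk_nhds hv)
  have h2 := h1.tendsto_div_nhds_zero.add_const c
  rw [zero_add] at h2
  refine h2.congr' ?_
  filter_upwards [hne] with a ha
  have : u a - v a ≠ 0 := sub_ne_zero.2 ha
  simp [Function.comp]
  field_simp
  ring

/-- `r₁(x,y) → 3/8` as `(x,y) → (0,0)` within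
`U = {(x,y) : x ≠ 0, y ≠ 0, x ≠ y, x + y ≠ 0}`. -/
theorem r1_tendsto_three_eighths :
    Tendsto r1fun
      (nhdsWithin (0, 0)
        {p : ℝ × ℝ | p.1 ≠ 0 ∧ p.2 ≠ 0 ∧ p.1 ≠ p.2 ∧ p.1 + p.2 ≠ 0})
      (nhds (3 / 8)) := by
  obtain ⟨C, hB, C0, hC⟩ := ext_aux
  set l := nhdsWithin ((0, 0) : ℝ × ℝ)
        {p : ℝ × ℝ | p.1 ≠ 0 ∧ p.2 ≠ 0 ∧ p.1 ≠ p.2 ∧ p.1 + p.2 ≠ 0} with hl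
  have hU : ∀ᶠ p in l, p.1 ≠ 0 ∧ p.2 ≠ 0 ∧ p.1 ≠ p.2 ∧ p.1 + p.2 ≠ 0 :=
    eventually_mem_nhdsWithin
  have key : ∀ f : ℝ × ℝ → ℝ, Continuous f → f (0, 0) = 0 → Tendsto f l (nhds 0) := by
    intro f hf h0
    have := (hf.tendsto (0, 0)).mono_left (nhdsWithin_le_nhds (s := {p : ℝ × ℝ | p.1 ≠ 0 ∧ p.2 ≠ 0 ∧ p.1 ≠ p.2 ∧ p.1 + p.2 ≠ 0}))
    rwa [h0] at this
  have t1 := key (fun p => p.1) (by fun_prop) rfl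
  have t2 := key (fun p => -p.2) (by fun_prop) (by simp)
  have t3 := key (fun p => p.1 - p.2) (by fun_prop) (by simp)
  have t4 := key (fun p => (p.1 + p.2) / 2) (by fun_prop) (by simp)
  have cc : Tendsto C (nhds 0) (nhds (1/2)) := by
    have := hC.hasDerivAt.continuousAt.tendsto
    rwa [C0] at this
  have q1 := quot_aux hC t2 t3 (by
    filter_upwards [hU] with p hp h
    exact hp.1 (by linarith))
  have q2 := quot_aux hC t4 t1 (by
    filter_upwards [hU] with p hp h
    exact hp.2.2.1 (by linarith))
  have T := (((cc.comp t3).mul (cc.comp t1)).sub q1).sub (q2.mul_const (1/2))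
  have e : (1/2 * (1/2) - -1/12 - -1/12 * (1/2) : ℝ) = 3/8 := by norm_num
  rw [e] at T
  refine T.congr' ?_
  filter_upwards [hU] with p ⟨h1, h2, h3, h4⟩
  have h5 : p.1 - p.2 ≠ 0 := sub_ne_zero.2 h3
  have h6 : p.2 - p.1 ≠ 0 := sub_ne_zero.2 h3.symm
  rw [r1fun, hB _ h5, hB _ h1, hB _ (neg_ne_zero.2 h2), hB _ (div_ne_zero h4 two_ne_zero)]
  have a1 : -p.2 - (p.1 - p.2) = -p.1 := by ring
  have a2 : (p.1 + p.2) / 2 - p.1 = (p.2 - p.1) / 2 := by ring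
  simp only [Function.comp, a1, a2]
  field_simp
  ring
end

section
/- For real t ≠ 0, define B(t) = 1/(1 − e^t) + 1/t. Define r₁(x,y) = B(x−y)B(x) + (1/x)(B(−y) − B(x−y)) − (1/(y−x))(B((x+y)/2) − B(x)) on the set U = {(x,y) ∈ ℝ² : x ≠ 0, y ≠ 0, x ≠ y, x + y ≠ 0}. Then (r₁(x,y) − (3/8 − x/12 + y/24)) / √(x² + y²) tends to 0 as (x,y) tends to (0,0) within U. -/
open Filter

lemma aux_exp : ∃ R : ℝ → ℝ, AnalyticAt ℝ R 0 ∧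
    ∀ t, Real.exp t = 1 + t + t^2/2 + t^3/6 + t^4/24 + t^5 * R t := by
  obtain ⟨R, hR, h⟩ := (analyticAt_rexp (x := 0)).exists_eq_sum_add_pow_mul 5
  refine ⟨R, hR, fun t => ?_⟩
  have := h t
  rw [this]
  simp [Finset.sum_range_succ, iteratedDeriv_eq_iterate, Real.iter_deriv_exp, Nat.factorial]

lemma aux_K : ∃ K : ℝ → ℝ, AnalyticAt ℝ K 0 ∧
    ∀ t, t ≠ 0 → Bfun t = 1/2 - t/12 + t^3 * K t := by
  obtain ⟨R, hR, h⟩ := aux_exp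
  refine ⟨fun t => (R t - 1/144 + t/288 - t * R t/2 + t^2 * R t/12) /
    (1 + t/2 + t^2/6 + t^3/24 + t^4 * R t), ?_, fun t ht => ?_⟩
  · apply AnalyticAt.div
    · fun_prop
    · fun_prop
    · norm_num
  · have hne : 1 - Real.exp t ≠ 0 := by
      intro h0
      apply ht
      rw [← Real.exp_eq_one_iff]; linarith
    have hE : 1 - Real.exp t = - (t * (1 + t/2 + t^2/6 + t^3/24 + t^4 * R t)) := by
      rw [h t]; ring
    have hE' : 1 + t/2 + t^2/6 + t^3/24 + t^4 * R t ≠ 0 := by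
      intro h0; rw [h0] at hE; apply hne; rw [hE]; ring
    unfold Bfun
    rw [hE]
    beta_reduce
    generalize hD : 1 + t/2 + t^2/6 + t^3/24 + t^4 * R t = D at *
    have : 1 / -(t * D) + 1/t = ((D - 1)/t)/D := by field_simp; ring
    rw [this, div_eq_iff hE', add_mul, mul_assoc, div_mul_cancel₀ _ hE', div_eq_iff ht, ← hD]
    ring

lemma aux_G : ∃ C δ : ℝ, 0 < C ∧ 0 < δ ∧ δ ≤ 1 ∧ ∃ G : ℝ → ℝ,
    (∀ t, t ≠ 0 → Bfun t = 1/2 - t/12 + G t) ∧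
    (∀ r a, r < δ → |a| ≤ r → |G a| ≤ C * r^2) ∧
    (∀ r a b, r < δ → |a| ≤ r → |b| ≤ r → |G a - G b| ≤ C * r^2 * |a - b|) := by
  obtain ⟨K, hK, h⟩ := aux_K
  obtain ⟨L, s, hs, hL⟩ := (hK.contDiffAt (n := 1)).exists_lipschitzOnWith
  obtain ⟨ε, hε, hb⟩ := Metric.mem_nhds_iff.1 hs
  have hL' : ∀ a b, |a| < ε → |b| < ε → |K a - K b| ≤ L * |a - b| := by
    intro a b ha hb'
    have := hL.dist_le_mul a (hb (by simpa using ha)) b (hb (by simpa using hb'))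
    simpa [Real.dist_eq] using this
  have hL0 : (0:ℝ) ≤ L := L.2
  generalize (L:ℝ) = l at *
  set M := |K 0| + l + 1 with hM
  have hM0 : 0 < M := by positivity
  have hKM : ∀ a, |a| < ε → |a| ≤ 1 → |K a| ≤ M := by
    intro a ha ha1
    have h1 := hL' a 0 ha (by simpa using hε)
    rw [sub_zero] at h1
    have h2 : |K a| ≤ |K a - K 0| + |K 0| := by
      simpa using abs_add_le (K a - K 0) (K 0)
    have : l * |a| ≤ l := by nlinarith
    linarith
  refine ⟨3 * M + l, min ε 1, by positivity, by positivity, min_le_right _ _,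
    fun t => t^3 * K t, h, ?_, ?_⟩
  · intro r a hr ha
    have hr1 : r < ε := hr.trans_le (min_le_left _ _)
    have hr2 : r < 1 := hr.trans_le (min_le_right _ _)
    have h0 := abs_nonneg a
    have hr0 : 0 ≤ r := h0.trans ha
    have := hKM a (by linarith) (by linarith)
    rw [abs_mul, abs_pow]
    calc |a|^3 * |K a| ≤ r^3 * M := by gcongr
      _ = M * r^2 * r := by ring
      _ ≤ M * r^2 * 1 := by gcongr
      _ ≤ (3 * M + l) * r^2 := by nlinarith [sq_nonneg r]
  · intro r a b hr ha hb
    have hr1 : r < ε := hr.trans_le (min_le_left _ _)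
    have hr2 : r < 1 := hr.trans_le (min_le_right _ _)
    have h0 := abs_nonneg a
    have hr0 : 0 ≤ r := h0.trans ha
    have k1 := hKM a (by linarith) (by linarith)
    have k2 := hL' a b (by linarith) (by linarith)
    have e : a^3 * K a - b^3 * K b = (a - b) * (a^2 + a*b + b^2) * K a + b^3 * (K a - K b) := by
      ring
    have q : |a^2 + a*b + b^2| ≤ 3 * r^2 := by
      have h1 := abs_add_three (a^2) (a*b) (b^2)
      rw [abs_pow, abs_mul, abs_pow] at h1
      have h2 : |a|^2 ≤ r^2 := by gcongr
      have h3 : |b|^2 ≤ r^2 := by gcongr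
      have h4 : |a| * |b| ≤ r * r := by gcongr
      nlinarith
    have c : |b|^3 ≤ r^2 := by
      calc |b|^3 ≤ r^3 := by gcongr
        _ = r^2 * r := by ring
        _ ≤ r^2 * 1 := by gcongr
        _ = r^2 := by ring
    show |a^3 * K a - b^3 * K b| ≤ _
    rw [e]
    calc _ ≤ |(a - b) * (a^2 + a*b + b^2) * K a| + |b^3 * (K a - K b)| := abs_add_le _ _
      _ = |a - b| * |a^2 + a*b + b^2| * |K a| + |b|^3 * |K a - K b| := by
        simp only [abs_mul, abs_pow]
      _ ≤ |a - b| * (3 * r^2) * M + r^2 * (l * |a - b|) := by gcongr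
      _ = _ := by ring

lemma aux_main : ∃ D δ : ℝ, 0 < D ∧ 0 < δ ∧ ∀ x y : ℝ, x ≠ 0 → y ≠ 0 → x ≠ y → x + y ≠ 0 →
    |x| + |y| < δ → |r1fun (x, y) - (3 / 8 - x / 12 + y / 24)| ≤ D * (|x| + |y|)^2 := by
  obtain ⟨C, δ, hC, hδ, hδ1, G, hB, hG, hGG⟩ := aux_G
  refine ⟨1 + 4 * C + C^2, δ, by positivity, hδ, fun x y hx hy hxy hxy' hn => ?_⟩
  have hu : x - y ≠ 0 := sub_ne_zero.2 hxy
  have hu' : y - x ≠ 0 := sub_ne_zero.2 hxy.symm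
  have hx0 := abs_nonneg x
  have hy0 := abs_nonneg y
  generalize hr : |x| + |y| = r at *
  have a1 : |x - y| ≤ r := by rw [← hr]; exact abs_sub x y
  have a2 : |x| ≤ r := by linarith
  have a3 : |-y| ≤ r := by rw [abs_neg]; linarith
  have a4 : |(x + y)/2| ≤ r := by
    rw [abs_div, abs_two]; have := abs_add_le x y; linarith
  have hr0 : 0 ≤ r := by linarith
  have hr1 : r < 1 := by linarith
  have g1 := hG r _ hn a1
  have g2 := hG r _ hn a2
  have d1 := hGG r _ _ hn a3 a1
  have d2 := hGG r _ _ hn a4 a2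
  have e1 : |-y - (x - y)| = |x| := by rw [← abs_neg]; congr 1; ring
  have e2 : |(x+y)/2 - x| = |y - x| / 2 := by
    rw [show (x+y)/2 - x = (y-x)/2 by ring, abs_div, abs_two]
  rw [e1] at d1
  rw [e2] at d2
  have t1 : |(1/x) * (G (-y) - G (x-y))| ≤ C * r^2 := by
    rw [abs_mul, abs_div, abs_one, one_div_mul_eq_div, div_le_iff₀ (abs_pos.2 hx)]; exact d1
  have t2 : |(1/(y-x)) * (G ((x+y)/2) - G x)| ≤ C * r^2 := by
    rw [abs_mul, abs_div, abs_one, one_div_mul_eq_div, div_le_iff₀ (abs_pos.2 hu')]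
    have : 0 ≤ C * r^2 * |y-x| := by positivity
    linarith
  have key : r1fun (x, y) - (3 / 8 - x / 12 + y / 24) =
      G (x-y) * (1/2 - x/12) + (1/2 - (x-y)/12) * G x + G (x-y) * G x + (x-y)*x/144
      + (1/x) * (G (-y) - G (x-y)) - (1/(y-x)) * (G ((x+y)/2) - G x) := by
    simp only [r1fun]
    rw [hB _ hu, hB _ hx, hB _ (neg_ne_zero.2 hy), hB ((x+y)/2) (by simpa using hxy')]
    field_simp
    ring
  have s1 : |G (x-y) * (1/2 - x/12)| ≤ C * r^2 := by
    rw [abs_mul, ← mul_one (C * r^2)]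
    gcongr
    rw [abs_le] at a2 ⊢; constructor <;> linarith
  have s2 : |(1/2 - (x-y)/12) * G x| ≤ C * r^2 := by
    rw [abs_mul, ← one_mul (C * r^2)]
    gcongr
    rw [abs_le] at a1 ⊢; constructor <;> linarith
  have s3 : |G (x-y) * G x| ≤ C^2 * r^2 := by
    rw [abs_mul]
    calc _ ≤ (C * r^2) * (C * r^2) := by gcongr
      _ = C^2 * r^2 * r^2 := by ring
      _ ≤ C^2 * r^2 * 1 := by gcongr; nlinarith
      _ = _ := by ring
  have s4 : |(x-y)*x/144| ≤ r^2 := by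
    rw [abs_div, abs_mul, abs_of_pos (by norm_num : (0:ℝ) < 144)]
    have : |x-y| * |x| ≤ r * r := by gcongr
    nlinarith
  rw [key]
  generalize G (x-y) * (1/2 - x/12) = A1 at *
  generalize (1/2 - (x-y)/12) * G x = A2 at *
  generalize G (x-y) * G x = A3 at *
  generalize (x-y)*x/144 = A4 at *
  generalize (1/x) * (G (-y) - G (x-y)) = A5 at *
  generalize (1/(y-x)) * (G ((x+y)/2) - G x) = A6 at *
  have b1 := abs_le.1 s1
  have b2 := abs_le.1 s2
  have b3 := abs_le.1 s3
  have b4 := abs_le.1 s4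
  have b5 := abs_le.1 t1
  have b6 := abs_le.1 t2
  have eD : (1 + 4 * C + C^2) * r^2 = r^2 + 4 * (C * r^2) + C^2 * r^2 := by ring
  rw [eD, abs_le]
  constructor <;> linarith [b1.1, b1.2, b2.1, b2.2, b3.1, b3.2, b4.1, b4.2, b5.1, b5.2, b6.1, b6.2]

/-- First-order expansion `r₁(x,y) = 3/8 − x/12 + y/24 + o(‖(x,y)‖)` at the origin,
within `U = {(x,y) : x ≠ 0, y ≠ 0, x ≠ y, x + y ≠ 0}`. -/
theorem r1_first_order_expansion :
    Tendsto
      (fun p : ℝ × ℝ =>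
        (r1fun p - (3 / 8 - p.1 / 12 + p.2 / 24)) / Real.sqrt (p.1 ^ 2 + p.2 ^ 2))
      (nhdsWithin (0, 0)
        {p : ℝ × ℝ | p.1 ≠ 0 ∧ p.2 ≠ 0 ∧ p.1 ≠ p.2 ∧ p.1 + p.2 ≠ 0})
      (nhds 0) := by
  obtain ⟨D, δ, hD, hδ, h⟩ := aux_main
  have hlim : Tendsto (fun p : ℝ × ℝ => 2 * D * (|p.1| + |p.2|))
      (nhdsWithin (0, 0) {p : ℝ × ℝ | p.1 ≠ 0 ∧ p.2 ≠ 0 ∧ p.1 ≠ p.2 ∧ p.1 + p.2 ≠ 0})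
      (nhds 0) := by
    apply tendsto_nhdsWithin_of_tendsto_nhds
    have : Continuous (fun p : ℝ × ℝ => 2 * D * (|p.1| + |p.2|)) := by fun_prop
    simpa using this.tendsto (0, 0)
  have hev : ∀ᶠ p : ℝ × ℝ in nhds (0, 0), |p.1| + |p.2| < δ := by
    have : Continuous (fun p : ℝ × ℝ => |p.1| + |p.2|) := by fun_prop
    exact this.continuousAt.eventually_lt continuousAt_const (by simpa using hδ)
  refine squeeze_zero_norm' ?_ hlim
  filter_upwards [self_mem_nhdsWithin, hev.filter_mono nhdsWithin_le_nhds] with p hp hpd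
  obtain ⟨x, y⟩ := p
  obtain ⟨h1, h2, h3, h4⟩ := hp
  have hm := h x y h1 h2 h3 h4 hpd
  have hpos : 0 < Real.sqrt (x^2 + y^2) := Real.sqrt_pos.2 (by
    have : 0 < x^2 := by positivity
    positivity)
  have hs : |x| + |y| ≤ 2 * Real.sqrt (x^2 + y^2) := by
    have u1 : |x| ≤ Real.sqrt (x^2 + y^2) := Real.abs_le_sqrt (by nlinarith [sq_nonneg y])
    have u2 : |y| ≤ Real.sqrt (x^2 + y^2) := Real.abs_le_sqrt (by nlinarith [sq_nonneg x])
    linarith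
  rw [Real.norm_eq_abs, abs_div, abs_of_pos hpos, div_le_iff₀ hpos]
  refine hm.trans ?_
  have hn : 0 ≤ D * (|x| + |y|) := by positivity
  have := mul_le_mul_of_nonneg_left hs hn
  simp only
  nlinarith
end

section
/- For real t ≠ 0, define B(t) = 1/(1 − e^t) + 1/t. Let ξ₁, ξ₂ be real numbers with ξ₁ ≠ 0, ξ₂ ≠ 0, ξ₁ ≠ ξ₂, and ξ₁ + ξ₂ ≠ 0. Then B(−ξ₁)B(−ξ₂) = [B(ξ₂−ξ₁)B(−ξ₂) − (1/ξ₂)(B(−ξ₁) − B(ξ₂−ξ₁)) − (1/(ξ₁−ξ₂))(B(−(ξ₁+ξ₂)/2) − B(−ξ₂))] + [B(ξ₁−ξ₂)B(−ξ₁) − (1/ξ₁)(B(−ξ₂) − B(ξ₁−ξ₂)) − (1/(ξ₂−ξ₁))(B(−(ξ₁+ξ₂)/2) − B(−ξ₁))]. -/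
/-- Additivity of Todd coefficients under the subdivision of `Cone((1,0),(0,1))`
by the diagonal ray through `(1,1)`: `r^Ψ(σ) = r^Ψ(σ₁) + r^Ψ(σ₂)`. -/
theorem todd_coeff_additivity (ξ₁ ξ₂ : ℝ)
    (h1 : ξ₁ ≠ 0) (h2 : ξ₂ ≠ 0) (h12 : ξ₁ ≠ ξ₂) (h12' : ξ₁ + ξ₂ ≠ 0) :
    Bfun (-ξ₁) * Bfun (-ξ₂) =
      (Bfun (ξ₂ - ξ₁) * Bfun (-ξ₂)
        - (1 / ξ₂) * (Bfun (-ξ₁) - Bfun (ξ₂ - ξ₁))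
        - (1 / (ξ₁ - ξ₂)) * (Bfun (-(ξ₁ + ξ₂) / 2) - Bfun (-ξ₂)))
      + (Bfun (ξ₁ - ξ₂) * Bfun (-ξ₁)
        - (1 / ξ₁) * (Bfun (-ξ₂) - Bfun (ξ₁ - ξ₂))
        - (1 / (ξ₂ - ξ₁)) * (Bfun (-(ξ₁ + ξ₂) / 2) - Bfun (-ξ₁))) := by
  have hx : 1 - Real.exp (-ξ₁) ≠ 0 := by
    intro h
    have := (Real.exp_eq_one_iff (-ξ₁)).1 (by linarith)
    exact h1 (by linarith)
  have hy : 1 - Real.exp (-ξ₂) ≠ 0 := by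
    intro h
    have := (Real.exp_eq_one_iff (-ξ₂)).1 (by linarith)
    exact h2 (by linarith)
  have hxy : Real.exp (-ξ₂) - Real.exp (-ξ₁) ≠ 0 := by
    intro h
    have := Real.exp_injective (sub_eq_zero.1 h)
    exact h12 (by linarith)
  have hyx : Real.exp (-ξ₁) - Real.exp (-ξ₂) ≠ 0 := by
    intro h
    exact hxy (by linarith)
  have e1 : 1 / (1 - Real.exp (ξ₂ - ξ₁)) =
      Real.exp (-ξ₂) / (Real.exp (-ξ₂) - Real.exp (-ξ₁)) := by
    have h : Real.exp (ξ₂ - ξ₁) = Real.exp (-ξ₁) / Real.exp (-ξ₂) := by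
      rw [← Real.exp_sub]; congr 1; ring
    have h0 := Real.exp_ne_zero (-ξ₂)
    rw [h, one_sub_div h0, one_div_div]
  have e2 : 1 / (1 - Real.exp (ξ₁ - ξ₂)) =
      1 - Real.exp (-ξ₂) / (Real.exp (-ξ₂) - Real.exp (-ξ₁)) := by
    have h : Real.exp (ξ₁ - ξ₂) = Real.exp (-ξ₂) / Real.exp (-ξ₁) := by
      rw [← Real.exp_sub]; congr 1; ring
    have h0 := Real.exp_ne_zero (-ξ₁)
    rw [h, one_sub_div h0, one_div_div, one_sub_div hxy, ← neg_sub (Real.exp (-ξ₂)), div_neg]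
    ring
  have key : 1 / (1 - Real.exp (-ξ₁)) * (1 / (1 - Real.exp (-ξ₂))) =
      Real.exp (-ξ₂) / (Real.exp (-ξ₂) - Real.exp (-ξ₁)) * (1 / (1 - Real.exp (-ξ₂)))
      + (1 - Real.exp (-ξ₂) / (Real.exp (-ξ₂) - Real.exp (-ξ₁)))
        * (1 / (1 - Real.exp (-ξ₁))) := by
    field_simp
    ring
  unfold Bfun
  rw [e1, e2]
  generalize 1 / (1 - Real.exp (-(ξ₁ + ξ₂) / 2)) + 1 / (-(ξ₁ + ξ₂) / 2) = m
  generalize Real.exp (-ξ₂) / (Real.exp (-ξ₂) - Real.exp (-ξ₁)) = r at *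
  generalize 1 / (1 - Real.exp (-ξ₁)) = p at *
  generalize 1 / (1 - Real.exp (-ξ₂)) = q at *
  have hd : ξ₁ - ξ₂ ≠ 0 := sub_ne_zero.2 h12
  have i1 : (1:ℝ) / (ξ₂ - ξ₁) = -(1 / (ξ₁ - ξ₂)) := by
    rw [← neg_sub, div_neg]
  have i2 : (1:ℝ) / (-ξ₁) = -(1 / ξ₁) := by rw [div_neg]
  have i3 : (1:ℝ) / (-ξ₂) = -(1 / ξ₂) := by rw [div_neg]
  rw [i1, i2, i3]
  have k2 : (1 / ξ₁) * (1 / ξ₂) = (1 / (ξ₁ - ξ₂)) * (1 / ξ₂ - 1 / ξ₁) := by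
    field_simp
  generalize 1 / (ξ₁ - ξ₂) = d at *
  generalize 1 / ξ₁ = a at *
  generalize 1 / ξ₂ = b at *
  linear_combination key - k2
end
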